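/- Let (x*,λ*) ∈ ℝⁿ × ℝ≥0^m be a saddle point of the Lagrangian L over ℝⁿ × ℝ≥0^m, and let (x,λ) ∈ ℝⁿ × ℝ≥0^m satisfy ⟨x − x*, ∇f(x) − Σᵢ λᵢ ∇gᵢ(x)⟩ + ⟨λ − λ*, [g(x)]_λ^+⟩ = 0. Then x = x* and λᵀg(x*) = 0. -/

import Mathlib

open scoped RealInnerProductSpace

/-!
Write `L(λ, x)` for the Lagrangian. Concavity of `L(λ, ·)` bounds the primal part of the Lie
derivative at `(x, λ)` by `L(λ, x) - L(λ, x*)`, while linearity of `L(·, x)` bounds the dual part by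
`L(λ*, x) - L(λ, x)`. The sum telescopes to `L(λ*, x) - L(λ, x*)`, which is nonpositive at a saddle
point `(x*, λ*)`. If the Lie derivative vanishes, then `L(λ*, x) = L(λ*, x*) = L(λ, x*)`. The first
equality makes `x` a maximizer of the strictly concave function `L(λ*, ·)`, so `x = x*`; the second
says that `λᵀg(x*) = λ*ᵀg(x*)`, which is zero by complementary slackness.
-/

section Convex

variable {ι 𝕜 E β : Type*}

theorem convexOn_sum [Semiring 𝕜] [PartialOrder 𝕜] [AddCommMonoid E] [SMul 𝕜 E]
    [AddCommMonoid β] [PartialOrder β] [IsOrderedAddMonoid β] [Module 𝕜 β]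
    {s : Set E} {t : Finset ι} {f : ι → E → β} (hs : Convex 𝕜 s)
    (hf : ∀ i ∈ t, ConvexOn 𝕜 s (f i)) : ConvexOn 𝕜 s (fun x ↦ ∑ i ∈ t, f i x) := by
  simp only [← Finset.sum_apply]
  exact Finset.sum_induction f (ConvexOn 𝕜 s) (fun _ _ ↦ ConvexOn.add) (convexOn_const 0 hs) hf

theorem sub_le_of_concaveOn_of_hasFDerivAt [NormedAddCommGroup E] [NormedSpace ℝ E] {s : Set E}
    {f : E → ℝ} {f' : E →L[ℝ] ℝ} {x y : E} (hf : ConcaveOn ℝ s f) (hf' : HasFDerivAt f f' x)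
    (hx : x ∈ s) (hy : y ∈ s) : f y - f x ≤ f' (y - x) := by
  let line : ℝ →ᵃ[ℝ] E := AffineMap.lineMap x y
  have hconcave : ConcaveOn ℝ (line ⁻¹' s) (f ∘ line) := hf.comp_affineMap line
  have hderiv : HasDerivAt (f ∘ line) (f' (y - x)) 0 :=
    HasFDerivAt.comp_hasDerivAt 0 (by simpa [line] using hf') AffineMap.hasDerivAt_lineMap
  simpa [slope_def_field, line] using hconcave.slope_le_of_hasDerivAt
    (by simpa [line] using hx) (by simpa [line] using hy) one_pos hderiv

end Convex

theorem eq_and_eq_of_isSaddlePointOn_of_le {E F β : Type*} [PartialOrder β] {X : Set E} {Y : Set F}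
    {f : E → F → β} {a x : E} {b y : F} (h : IsSaddlePointOn X Y f a b) (ha : a ∈ X) (hb : b ∈ Y)
    (hx : x ∈ X) (hy : y ∈ Y) (hle : f x b ≤ f a y) : f a y = f a b ∧ f x b = f a b :=
  ⟨(h a ha y hy).antisymm ((h x hx b hb).trans hle),
    (hle.trans (h a ha y hy)).antisymm (h x hx b hb)⟩

/-- The Lagrangian `L(x, λ) = f x - λᵀ g(x)` of the problem of maximizing `f` subject to `g ≤ 0`.
The multiplier comes first because `IsSaddlePointOn` minimizes over the first argument. -/
def lagrangian {ι E : Type*} [Fintype ι] (f : E → ℝ) (g : ι → E → ℝ) (lam : ι → ℝ) (x : E) : ℝ :=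
  f x - ∑ i, lam i * g i x

/-- The projection `[a]_b⁺`, which keeps a multiplier `b ≥ 0` moving with velocity `a` nonnegative.
The paper's case `b = 0` is extended to all `b ≤ 0`. -/
noncomputable def positiveProjection (a b : ℝ) : ℝ :=
  if 0 < b then a else max 0 a

/-- The Lie derivative at `(x, lam)` of `V(x, λ) = (‖x - xs‖² + ‖λ - ls‖²) / 2` along the
primal-dual dynamics `x' = ∇f(x) - ∑ i, λᵢ ∇gᵢ(x)`, `λ' = [g(x)]_λ⁺`. -/
noncomputable def primalDualLieDerivative {ι E : Type*} [Fintype ι] [NormedAddCommGroup E]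
    [InnerProductSpace ℝ E] [CompleteSpace E] (f : E → ℝ) (g : ι → E → ℝ) (xs : E) (ls : ι → ℝ)
    (x : E) (lam : ι → ℝ) : ℝ :=
  ⟪x - xs, gradient f x - ∑ i, lam i • gradient (g i) x⟫ +
    ∑ i, (lam i - ls i) * positiveProjection (g i x) (lam i)

theorem sub_mul_positiveProjection_le {a b c : ℝ} (hc : 0 ≤ c) :
    (b - c) * positiveProjection a b ≤ (b - c) * a := by
  unfold positiveProjection
  split_ifs with hpos
  · rfl
  · have hbc : b - c ≤ 0 := sub_nonpos.mpr ((not_lt.mp hpos).trans hc)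
    exact mul_le_mul_of_nonpos_left (le_max_right 0 a) hbc

section Lagrangian

variable {ι E : Type*} [Fintype ι] {f : E → ℝ} {g : ι → E → ℝ} {s : Set E} {lam ls : ι → ℝ}
  {x xs : E}

theorem lagrangian_sub_lagrangian :
    lagrangian f g ls x - lagrangian f g lam x = ∑ i, (lam i - ls i) * g i x := by
  simp only [lagrangian, sub_mul, Finset.sum_sub_distrib]
  ring

theorem sum_mul_eq_zero_of_isSaddlePointOn_lagrangian
    (h : IsSaddlePointOn (Set.Ici 0) s (lagrangian f g) ls xs) (hls : 0 ≤ ls) (hxs : xs ∈ s) :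
    ∑ i, ls i * g i xs = 0 := by
  have hzero := h 0 Set.self_mem_Ici xs hxs
  have hdouble := h ((2 : ℝ) • ls) (smul_nonneg zero_le_two hls) xs hxs
  simp only [lagrangian, Pi.zero_apply, Pi.smul_apply, smul_eq_mul, zero_mul,
    Finset.sum_const_zero, mul_assoc, ← Finset.mul_sum] at hzero hdouble
  linarith

section Concave

variable [AddCommMonoid E] [SMul ℝ E]

theorem convexOn_sum_mul (hs : Convex ℝ s) (hg : ∀ i, ConvexOn ℝ s (g i)) (hlam : 0 ≤ lam) :
    ConvexOn ℝ s (fun x ↦ ∑ i, lam i * g i x) :=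
  convexOn_sum hs fun i _ ↦ (hg i).smul (hlam i)

theorem concaveOn_lagrangian (hf : ConcaveOn ℝ s f) (hg : ∀ i, ConvexOn ℝ s (g i))
    (hlam : 0 ≤ lam) : ConcaveOn ℝ s (lagrangian f g lam) :=
  hf.sub (convexOn_sum_mul hf.1 hg hlam)

theorem strictConcaveOn_lagrangian (hf : StrictConcaveOn ℝ s f) (hg : ∀ i, ConvexOn ℝ s (g i))
    (hlam : 0 ≤ lam) : StrictConcaveOn ℝ s (lagrangian f g lam) :=
  hf.sub_convexOn (convexOn_sum_mul hf.1 hg hlam)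

theorem eq_of_isSaddlePointOn_lagrangian (hf : StrictConcaveOn ℝ s f)
    (hg : ∀ i, ConvexOn ℝ s (g i)) (h : IsSaddlePointOn (Set.Ici 0) s (lagrangian f g) ls xs)
    (hls : 0 ≤ ls) (hxs : xs ∈ s) (hx : x ∈ s)
    (heq : lagrangian f g ls x = lagrangian f g ls xs) : x = xs :=
  (strictConcaveOn_lagrangian hf hg hls).eq_of_isMaxOn
    (fun y hy ↦ (h ls hls y hy).trans_eq heq.symm) (h ls hls) hx hxs

end Concave

variable [NormedAddCommGroup E] [InnerProductSpace ℝ E] [CompleteSpace E]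

theorem hasGradientAt_lagrangian {f' : E} {g' : ι → E} (hf : HasGradientAt f f' x)
    (hg : ∀ i, HasGradientAt (g i) (g' i) x) :
    HasGradientAt (lagrangian f g lam) (f' - ∑ i, lam i • g' i) x := by
  have hsum := HasFDerivAt.fun_sum (u := Finset.univ)
    fun i _ ↦ (hg i).hasFDerivAt.const_mul (lam i)
  exact (hf.hasFDerivAt.sub hsum).congr_fderiv (by simp)

theorem inner_sub_gradient_le_lagrangian_sub (hf : ConcaveOn ℝ s f)
    (hg : ∀ i, ConvexOn ℝ s (g i)) (hfd : DifferentiableAt ℝ f x)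
    (hgd : ∀ i, DifferentiableAt ℝ (g i) x) (hlam : 0 ≤ lam) (hx : x ∈ s) (hxs : xs ∈ s) :
    ⟪x - xs, gradient f x - ∑ i, lam i • gradient (g i) x⟫ ≤
      lagrangian f g lam x - lagrangian f g lam xs := by
  have hgrad := hasGradientAt_lagrangian (lam := lam) hfd.hasGradientAt
    fun i ↦ (hgd i).hasGradientAt
  have hle := sub_le_of_concaveOn_of_hasFDerivAt (concaveOn_lagrangian hf hg hlam)
    hgrad.hasFDerivAt hx hxs
  rw [InnerProductSpace.toDual_apply_apply, real_inner_comm, ← neg_sub x xs, inner_neg_left] at hle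
  linarith

theorem primalDualLieDerivative_le (hf : ConcaveOn ℝ s f) (hg : ∀ i, ConvexOn ℝ s (g i))
    (hfd : DifferentiableAt ℝ f x) (hgd : ∀ i, DifferentiableAt ℝ (g i) x) (hls : 0 ≤ ls)
    (hlam : 0 ≤ lam) (hx : x ∈ s) (hxs : xs ∈ s) :
    primalDualLieDerivative f g xs ls x lam ≤ lagrangian f g ls x - lagrangian f g lam xs :=
  calc
    primalDualLieDerivative f g xs ls x lam
        ≤ (lagrangian f g lam x - lagrangian f g lam xs) + ∑ i, (lam i - ls i) * g i x :=
      add_le_add (inner_sub_gradient_le_lagrangian_sub hf hg hfd hgd hlam hx hxs)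
        (Finset.sum_le_sum fun i _ ↦ sub_mul_positiveProjection_le (hls i))
    _ = lagrangian f g ls x - lagrangian f g lam xs := by
      rw [← lagrangian_sub_lagrangian]
      ring

theorem lie_derivative_zero_characterization_general (hf : StrictConcaveOn ℝ s f)
    (hg : ∀ i, ConvexOn ℝ s (g i)) (hfd : DifferentiableAt ℝ f x)
    (hgd : ∀ i, DifferentiableAt ℝ (g i) x) (hls : 0 ≤ ls) (hxs : xs ∈ s)
    (hsaddle : IsSaddlePointOn (Set.Ici 0) s (lagrangian f g) ls xs) (hlam : 0 ≤ lam) (hx : x ∈ s)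
    (hzero : primalDualLieDerivative f g xs ls x lam = 0) :
    x = xs ∧ ∑ i, lam i * g i xs = 0 := by
  have hlie := primalDualLieDerivative_le hf.concaveOn hg hfd hgd hls hlam hx hxs
  have hle : lagrangian f g lam xs ≤ lagrangian f g ls x := sub_nonneg.mp (hzero ▸ hlie)
  obtain ⟨hprimal, hdual⟩ := eq_and_eq_of_isSaddlePointOn_of_le hsaddle hls hxs hlam hx hle
  refine ⟨eq_of_isSaddlePointOn_lagrangian hf hg hsaddle hls hxs hx hprimal, ?_⟩
  calc
    ∑ i, lam i * g i xs = ∑ i, ls i * g i xs := sub_right_injective hdual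
    _ = 0 := sum_mul_eq_zero_of_isSaddlePointOn_lagrangian hsaddle hls hxs

end Lagrangian

/-- if `(x*,λ*)` is a saddle point of the Lagrangian over `ℝⁿ × ℝ≥0^m` and
`(x,λ) ∈ ℝⁿ × ℝ≥0^m` makes the Lie derivative of `V` along the primal-dual dynamics vanish,
i.e. `⟨x − x*, ∇f(x) − Σᵢ λᵢ∇gᵢ(x)⟩ + ⟨λ − λ*, [g(x)]_λ⁺⟩ = 0`, then `x = x*` and
`λᵀg(x*) = 0`. -/
theorem lie_derivative_zero_characterization (n m : ℕ)
    (f : EuclideanSpace ℝ (Fin n) → ℝ)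
    (g : Fin m → EuclideanSpace ℝ (Fin n) → ℝ)
    (hf : ContDiff ℝ 1 f) (hfconc : StrictConcaveOn ℝ Set.univ f)
    (hfgrad : LocallyLipschitz (gradient f))
    (hg : ∀ i, ContDiff ℝ 1 (g i))
    (hgconv : ∀ i, ConvexOn ℝ Set.univ (g i))
    (hggrad : ∀ i, LocallyLipschitz (gradient (g i)))
    (xs : EuclideanSpace ℝ (Fin n)) (ls : Fin m → ℝ) (hls : ∀ i, 0 ≤ ls i)
    (hsaddle1 : ∀ x, f x - ∑ i, ls i * g i x ≤ f xs - ∑ i, ls i * g i xs)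
    (hsaddle2 : ∀ lam : Fin m → ℝ, (∀ i, 0 ≤ lam i) →
      f xs - ∑ i, ls i * g i xs ≤ f xs - ∑ i, lam i * g i xs)
    (x : EuclideanSpace ℝ (Fin n)) (lam : Fin m → ℝ) (hlam : ∀ i, 0 ≤ lam i)
    (hzero : ⟪x - xs, gradient f x - ∑ i, lam i • gradient (g i) x⟫
      + ∑ i, (lam i - ls i) * (if 0 < lam i then g i x else max 0 (g i x)) = 0) :
    x = xs ∧ ∑ i, lam i * g i xs = 0 :=
  lie_derivative_zero_characterization_general hfconc hgconv (hf.differentiable one_ne_zero x)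
    (fun i ↦ (hg i).differentiable one_ne_zero x) hls (Set.mem_univ xs)
    (fun l hl y _ ↦ (hsaddle1 y).trans (hsaddle2 l hl)) hlam (Set.mem_univ x) hzero
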